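/- Let Λ be a finite dimensional algebra and T a tilting Λ-module with minimal projective resolution 0 → Q₁ → Q₀ → T → 0. Then (add Q₁) ∩ (add Q₀) = 0 and add(Q₀ ⊕ Q₁) = add Λ. -/

import Mathlib

/- STATEMENT 1: Let `Λ` be a finite dimensional algebra and `T` a tilting `Λ`-module with
minimal projective resolution `0 → Q₁ → Q₀ → T → 0`.  Then `(add Q₁) ∩ (add Q₀) = 0`
and `add (Q₀ ⊕ Q₁) = add Λ`. -/

open CategoryTheory

/-- `X` lies in `add M`: `X` is a direct summand of a finite direct sum of copies of `M`. -/
def InAdd (R : Type) [Ring R] (M : Type) [AddCommGroup M] [Module R M]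
    (X : Type) [AddCommGroup X] [Module R X] : Prop :=
  ∃ (m : ℕ) (Y : ModuleCat.{0} R), Nonempty ((X × Y) ≃ₗ[R] (Fin m → M))

/-- `T` is a (classical) tilting `R`-module: `T` is finitely generated, has projective
dimension at most 1, `Ext¹(T,T) = 0` (expressed by the lifting property along any
projective presentation of `T`), and there is an exact sequence `0 → R → T₀ → T₁ → 0`
with `T₀, T₁ ∈ add T`. -/
structure IsTilting (R : Type) [Ring R] (T : Type) [AddCommGroup T] [Module R T] : Prop where
  finite : Module.Finite R T
  pd_le_one : ∃ (Q0 Q1 : ModuleCat.{0} R) (i : Q1 →ₗ[R] Q0) (p : Q0 →ₗ[R] T),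
    Module.Projective R Q0 ∧ Module.Projective R Q1 ∧
    Function.Injective i ∧ Function.Surjective p ∧ Function.Exact i p
  ext_self_vanish : ∀ (Q0 Q1 : ModuleCat.{0} R) (i : Q1 →ₗ[R] Q0) (p : Q0 →ₗ[R] T),
    Module.Projective R Q0 → Module.Projective R Q1 →
    Function.Injective i → Function.Surjective p → Function.Exact i p →
    ∀ φ : Q1 →ₗ[R] T, ∃ ψ : Q0 →ₗ[R] T, ψ.comp i = φ
  coresolution : ∃ (T0 T1 : ModuleCat.{0} R) (a : R →ₗ[R] T0) (b : T0 →ₗ[R] T1),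
    InAdd R T T0 ∧ InAdd R T T1 ∧
    Function.Injective a ∧ Function.Surjective b ∧ Function.Exact a b

theorem inAdd_retract {R : Type} [Ring R] {M : Type} [AddCommGroup M] [Module R M]
    {X : Type} [AddCommGroup X] [Module R X] (h : InAdd R M X) :
    ∃ (m : ℕ) (s : X →ₗ[R] (Fin m → M)) (r : (Fin m → M) →ₗ[R] X), ∀ x, r (s x) = x := by
  obtain ⟨m, Y, ⟨e⟩⟩ := h
  exact ⟨m, e.toLinearMap.comp (LinearMap.inl R X Y),
    (LinearMap.fst R X Y).comp e.symm.toLinearMap, fun x => by simp⟩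

theorem inAdd_of_retract {R : Type} [Ring R] {M : Type} [AddCommGroup M] [Module R M]
    {X : Type} [AddCommGroup X] [Module R X] {ι : Type} [Fintype ι]
    (s : X →ₗ[R] (ι → M)) (r : (ι → M) →ₗ[R] X) (h : ∀ x, r (s x) = x) : InAdd R M X := by
  refine ⟨Fintype.card ι, ModuleCat.of R (LinearMap.ker r), ⟨?_⟩⟩
  let e : (X × LinearMap.ker r) ≃ₗ[R] (ι → M) :=
    LinearEquiv.ofLinearMap (s.coprod (LinearMap.ker r).subtype)
      (r.prod ((LinearMap.id - s.comp r).codRestrict (LinearMap.ker r)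
        (fun x => by simp [h])))
      (by
        apply LinearMap.ext
        intro x
        simp)
      (by
        apply LinearMap.ext
        rintro ⟨x, y, hy⟩
        have hy' : r y = 0 := hy
        ext <;> simp [h, hy'])
  exact e.trans (LinearEquiv.funCongrLeft R M (Fintype.equivFin ι).symm)

theorem inAdd_trans {R : Type} [Ring R] {M : Type} [AddCommGroup M] [Module R M]
    {N : Type} [AddCommGroup N] [Module R N]
    {X : Type} [AddCommGroup X] [Module R X] (h : InAdd R M N) (h' : InAdd R N X) :
    InAdd R M X := by
  obtain ⟨m, s, r, hsr⟩ := inAdd_retract h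
  obtain ⟨n, s', r', hsr'⟩ := inAdd_retract h'
  let c := LinearEquiv.curry R M (Fin n) (Fin m)
  refine inAdd_of_retract (ι := Fin n × Fin m)
    (c.symm.toLinearMap.comp ((s.compLeft (Fin n)).comp s'))
    (r'.comp ((r.compLeft (Fin n)).comp c.toLinearMap)) ?_
  intro x
  have : (r.compLeft (Fin n)) ((s.compLeft (Fin n)) (s' x)) = s' x := by
    ext j
    simp [hsr]
  simp [this, hsr']

theorem projective_fin_fun {R : Type} [Ring R] {M : Type} [AddCommGroup M] [Module R M]
    [Module.Projective R M] (n : ℕ) : Module.Projective R (Fin n → M) :=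
  Module.Projective.of_equiv (DFinsupp.linearEquivFunOnFintype (R := R) (M := fun _ : Fin n => M))

theorem inAdd_self_of_proj {R : Type} [Ring R] {X : Type} [AddCommGroup X] [Module R X]
    [Module.Finite R X] [Module.Projective R X] : InAdd R R X := by
  obtain ⟨n, f, hf⟩ := Module.Finite.exists_fin' R X
  obtain ⟨s, hs⟩ := Module.projective_lifting_property f LinearMap.id hf
  exact inAdd_of_retract s f (fun x => LinearMap.congr_fun hs x)

theorem hom_fun_zero {R : Type} [Ring R] {M : Type} [AddCommGroup M] [Module R M]
    {S : Type} [AddCommGroup S] [Module R S] (h : ∀ f : M →ₗ[R] S, f = 0)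
    {n : ℕ} (f : (Fin n → M) →ₗ[R] S) : f = 0 := by
  apply LinearMap.pi_ext'
  intro j
  rw [h (f.comp (LinearMap.single R (fun _ => M) j))]
  simp

theorem hom_add_zero {R : Type} [Ring R] {M : Type} [AddCommGroup M] [Module R M]
    {S : Type} [AddCommGroup S] [Module R S] (h : ∀ f : M →ₗ[R] S, f = 0)
    {X : Type} [AddCommGroup X] [Module R X] (hX : InAdd R M X)
    (f : X →ₗ[R] S) : f = 0 := by
  obtain ⟨n, s, r, hsr⟩ := inAdd_retract hX
  ext x
  have := LinearMap.congr_fun (hom_fun_zero h (f.comp r)) (s x)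
  simpa [hsr] using this

theorem subsingleton_of_hom {R : Type} [Ring R] {T : Type} [AddCommGroup T] [Module R T]
    {Q0 Q1 : Type} [AddCommGroup Q0] [Module R Q0] [AddCommGroup Q1] [Module R Q1]
    (i : Q1 →ₗ[R] Q0) (p : Q0 →ₗ[R] T) [Module.Projective R Q0]
    (hp : Function.Surjective p) (hex : Function.Exact i p)
    {T0 T1 : Type} [AddCommGroup T0] [Module R T0] [AddCommGroup T1] [Module R T1]
    (a : R →ₗ[R] T0) (b : T0 →ₗ[R] T1) (h0 : InAdd R T T0) (h1 : InAdd R T T1)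
    (ha : Function.Injective a) (hb : Function.Surjective b) (hab : Function.Exact a b)
    {S : Type} [AddCommGroup S] [Module R S]
    (hS0 : ∀ f : Q0 →ₗ[R] S, f = 0) (hS1 : ∀ f : Q1 →ₗ[R] S, f = 0) (f : R →ₗ[R] S) :
    f = 0 := by
  have hST : ∀ f : T →ₗ[R] S, f = 0 := by
    intro f
    ext x
    obtain ⟨y, rfl⟩ := hp x
    exact LinearMap.congr_fun (hS0 (f.comp p)) y
  obtain ⟨n, Y, ⟨e⟩⟩ := h1
  have hY : InAdd R T Y := by
    refine inAdd_of_retract (e.toLinearMap.comp (LinearMap.inr R T1 Y))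
      ((LinearMap.snd R T1 Y).comp e.symm.toLinearMap) (fun x => by simp)
  let b' : (T0 × Y) →ₗ[R] (Fin n → T) := e.toLinearMap.comp (b.prodMap LinearMap.id)
  have hb' : Function.Surjective b' := by
    intro t
    obtain ⟨x, hx⟩ := hb (e.symm t).1
    refine ⟨(x, (e.symm t).2), ?_⟩
    simp [b', hx]
  let a' : R →ₗ[R] (T0 × Y) := (LinearMap.inl R T0 Y).comp a
  have ha' : Function.Injective a' := by
    intro x y hxy
    apply ha
    simpa [a'] using hxy
  have hker : ∀ z, b' z = 0 → ∃ l, a' l = z := by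
    rintro ⟨x, y⟩ hz
    have : (b x, y) = (0 : T1 × Y) := by
      apply e.injective
      simpa [b'] using hz
    obtain ⟨hx, hy⟩ := Prod.mk.inj this
    obtain ⟨l, hl⟩ := (hab x).1 hx
    exact ⟨l, by simp [a', hl, hy]⟩
  have hba : ∀ l, b' (a' l) = 0 := by
    intro l
    simp [a', b', (hab (a l)).2 ⟨l, rfl⟩]
  have := projective_fin_fun (R := R) (M := Q0) n
  obtain ⟨u, hu⟩ := Module.projective_lifting_property b' (p.compLeft (Fin n)) hb'
  have hu' : ∀ q, b' (u q) = p.compLeft (Fin n) q := fun q => LinearMap.congr_fun hu q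
  -- the map on Q1
  have hv : ∀ y : Fin n → Q1, u (i.compLeft (Fin n) y) ∈ LinearMap.range a' := by
    intro y
    apply hker
    rw [hu']
    ext j
    exact (hex (i (y j))).2 ⟨_, rfl⟩
  let ea := LinearEquiv.ofInjective a' ha'
  let v : (Fin n → Q1) →ₗ[R] R :=
    ea.symm.toLinearMap.comp ((u.comp (i.compLeft (Fin n))).codRestrict (LinearMap.range a') hv)
  have hv' : ∀ y, a' (v y) = u (i.compLeft (Fin n) y) := by
    intro y
    have := LinearEquiv.ofInjective_apply a' (h := ha') (v y)
    rw [← this]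
    simp [v, ea]
  have hfv : ∀ y, f (v y) = 0 := fun y =>
    LinearMap.congr_fun (hom_fun_zero hS1 (f.comp v)) y
  let h : (R × (Fin n → Q0)) →ₗ[R] (T0 × Y) := a'.coprod u
  have hh : Function.Surjective h := by
    intro z
    choose q hq using fun j => hp (b' z j)
    have : b' (z - u q) = 0 := by
      rw [map_sub, hu', sub_eq_zero]
      ext j
      simp [hq]
    obtain ⟨l, hl⟩ := hker _ this
    exact ⟨(l, q), by simp [h, hl]⟩
  have hle : LinearMap.ker h ≤ LinearMap.ker (f.comp (LinearMap.fst R R (Fin n → Q0))) := by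
    rintro ⟨l, q⟩ hz
    have hz' : a' l + u q = 0 := by simpa [h] using hz
    have hq : p.compLeft (Fin n) q = 0 := by
      rw [← hu', eq_neg_of_add_eq_zero_right hz', map_neg, hba, neg_zero]
    choose y hy using fun j => (hex (q j)).1 (congrFun hq j)
    have hq' : q = i.compLeft (Fin n) y := by
      ext j
      simp [hy]
    have : l = - v y := by
      apply ha'
      rw [map_neg, hv', ← hq']
      exact eq_neg_of_add_eq_zero_left hz'
    simp [this, hfv]
  let eh := h.quotKerEquivOfSurjective hh
  let g : (T0 × Y) →ₗ[R] S := ((LinearMap.ker h).liftQ _ hle).comp eh.symm.toLinearMap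
  have hg : ∀ z, g (h z) = f z.1 := by
    intro z
    have : eh.symm (h z) = (LinearMap.ker h).mkQ z := by
      rw [LinearEquiv.symm_apply_eq]
      rfl
    simp [g, this]
  have hg0 : g.comp (LinearMap.inl R T0 Y) = 0 := hom_add_zero hST h0 _
  apply LinearMap.ext
  intro l
  have h2 := LinearMap.congr_fun hg0 (a l)
  have h3 := hg (l, 0)
  have h4 : h (l, 0) = (a l, 0) := by simp [h, a']
  rw [h4] at h3
  rw [← h3]
  exact h2

theorem inAdd_of_trace {R : Type} [Ring R] {Q : Type} [AddCommGroup Q] [Module R Q]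
    (h : (⨆ f : Q →ₗ[R] R, LinearMap.range f) = ⊤) : InAdd R Q R := by
  classical
  have h1 : (1 : R) ∈ (⨆ f : Q →ₗ[R] R, LinearMap.range f) := by rw [h]; trivial
  rw [Submodule.mem_iSup_iff_exists_finsupp] at h1
  obtain ⟨c, hc, hsum⟩ := h1
  choose q hq using hc
  let F : (c.support → Q) →ₗ[R] R := ∑ j : c.support, (j : Q →ₗ[R] R).comp (LinearMap.proj j)
  have hF : F (fun j => q j) = 1 := by
    rw [← hsum, Finsupp.sum, ← Finset.sum_coe_sort]
    simp [F, LinearMap.sum_apply, hq]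
  refine inAdd_of_retract (LinearMap.toSpanSingleton R (c.support → Q) (fun j => q j)) F ?_
  intro x
  simp [hF]

theorem hom_jacobson_fun {R : Type} [Ring R] {M N : Type} [AddCommGroup M] [Module R M]
    [AddCommGroup N] [Module R N] (h : ∀ (f : M →ₗ[R] N) x, f x ∈ Module.jacobson R N)
    {X : Type} [AddCommGroup X] [Module R X] [Module.Finite R X]
    (hM : InAdd R M X) (hN : InAdd R N X) : Subsingleton X := by
  classical
  obtain ⟨m, s, r, hsr⟩ := inAdd_retract hM
  obtain ⟨n, s', r', hsr'⟩ := inAdd_retract hN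
  by_contra hX
  rw [not_subsingleton_iff_nontrivial] at hX
  have hlt := Module.jacobson_lt_top R X
  apply hlt.ne
  rw [eq_top_iff]
  rintro x -
  have key : ∀ (k : Fin n) (w : Fin m → M), s' (r w) k ∈ Module.jacobson R N := by
    intro k w
    rw [← Finset.univ_sum_single w, map_sum, map_sum, Finset.sum_apply]
    apply Submodule.sum_mem
    intro j _
    exact h (((LinearMap.proj k).comp (s'.comp r)).comp (LinearMap.single R (fun _ => M) j)) (w j)
  have hx : x = r' (s' (r (s x))) := by rw [hsr, hsr']
  rw [hx, ← Finset.univ_sum_single (s' (r (s x))), map_sum]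
  apply Submodule.sum_mem
  intro k _
  exact Module.map_jacobson_le (r'.comp (LinearMap.single R (fun _ => N) k))
    ⟨_, key k (s x), rfl⟩

theorem stmt1 (K Λ : Type) [Field K] [Ring Λ] [Algebra K Λ] [FiniteDimensional K Λ]
    (T : Type) [AddCommGroup T] [Module Λ T] (hT : IsTilting Λ T)
    (Q0 Q1 : ModuleCat.{0} Λ) (i : Q1 →ₗ[Λ] Q0) (p : Q0 →ₗ[Λ] T)
    (hQ0 : Module.Projective Λ Q0) (hQ1 : Module.Projective Λ Q1)
    (hi : Function.Injective i) (hp : Function.Surjective p)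
    (hexact : Function.Exact i p)
    -- minimality: `p : Q₀ → T` is a projective cover, i.e. `ker p` is superfluous
    (hmin : ∀ N : Submodule Λ Q0, N ⊔ LinearMap.ker p = ⊤ → N = ⊤) :
    (∀ M : ModuleCat.{0} Λ, InAdd Λ Q1 M → InAdd Λ Q0 M → Subsingleton M) ∧
    (∀ M : ModuleCat.{0} Λ, InAdd Λ (Q0 × Q1 : Type) M ↔ InAdd Λ Λ M) := by
  have := hT.finite
  have : IsNoetherianRing Λ := isNoetherian_of_tower K inferInstance
  have fQ0 : Module.Finite Λ Q0 := by
    obtain ⟨n, f, hf⟩ := Module.Finite.exists_fin' Λ T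
    obtain ⟨g, hg⟩ := Module.projective_lifting_property p f hp
    have : LinearMap.range g = ⊤ := by
      apply hmin
      rw [eq_top_iff]
      rintro x -
      obtain ⟨y, hy⟩ := hf (p x)
      have hgy : p (g y) = p x := by rw [← hy, ← hg]; rfl
      rw [← add_sub_cancel (g y) x]
      exact Submodule.add_mem_sup ⟨y, rfl⟩ (by simp [hgy])
    exact Module.Finite.of_surjective g (LinearMap.range_eq_top.1 this)
  have fQ1 : Module.Finite Λ Q1 := Module.Finite.of_injective i hi
  refine ⟨?_, ?_⟩
  · have hkj : ∀ x, p x = 0 → x ∈ Module.jacobson Λ Q0 := by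
      intro x hx
      rw [Module.jacobson, Submodule.mem_sInf]
      intro N hN
      by_contra hxN
      apply hN.1
      apply hmin
      apply hN.2
      rw [lt_iff_le_and_ne]
      refine ⟨le_sup_left, fun hEq => hxN ?_⟩
      rw [hEq]
      exact Submodule.mem_sup_right hx
    have hij : ∀ x, i x ∈ Module.jacobson Λ Q0 := fun x => hkj _ ((hexact _).2 ⟨x, rfl⟩)
    have hf : ∀ (f : Q1 →ₗ[Λ] Q0) x, f x ∈ Module.jacobson Λ Q0 := by
      intro f x
      obtain ⟨ψ, hψ⟩ := hT.ext_self_vanish Q0 Q1 i p hQ0 hQ1 hi hp hexact (p.comp f)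
      obtain ⟨g, hg⟩ := Module.projective_lifting_property p ψ hp
      have h1 : p (f x - g (i x)) = 0 := by
        rw [map_sub, sub_eq_zero]
        have h2 := LinearMap.congr_fun hψ x
        have h3 := LinearMap.congr_fun hg (i x)
        simp only [LinearMap.comp_apply] at h2 h3
        rw [h3, h2]
      rw [← sub_add_cancel (f x) (g (i x))]
      exact add_mem (hkj _ h1) (Module.map_jacobson_le g ⟨_, hij x, rfl⟩)
    intro M hM1 hM0
    have : Module.Finite Λ M := by
      obtain ⟨m, s, r, hsr⟩ := inAdd_retract hM0
      exact Module.Finite.of_surjective r (fun x => ⟨s x, hsr x⟩)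
    exact hom_jacobson_fun hf hM1 hM0
  · intro M
    refine ⟨fun h => inAdd_trans inAdd_self_of_proj h, fun h => inAdd_trans ?_ h⟩
    obtain ⟨T0, T1, a, b, h0, h1, ha, hb, hab⟩ := hT.coresolution
    apply inAdd_of_trace
    set tr : Submodule Λ Λ := ⨆ f : (Q0 × Q1) →ₗ[Λ] Λ, LinearMap.range f with htr
    have hQ : ∀ f : (Q0 × Q1) →ₗ[Λ] (Λ ⧸ tr), f = 0 := by
      intro f
      obtain ⟨g, hg⟩ := Module.projective_lifting_property tr.mkQ f tr.mkQ_surjective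
      apply LinearMap.ext
      intro x
      rw [← hg]
      simp only [LinearMap.comp_apply, Submodule.mkQ_apply, LinearMap.zero_apply,
        Submodule.Quotient.mk_eq_zero]
      exact le_iSup (fun f : (Q0 × Q1) →ₗ[Λ] Λ => LinearMap.range f) g ⟨x, rfl⟩
    have hz : tr.mkQ = 0 := by
      refine subsingleton_of_hom i p hp hexact a b h0 h1 ha hb hab ?_ ?_ _
      · intro f
        ext x
        simpa using LinearMap.congr_fun (hQ (f.comp (LinearMap.fst Λ Q0 Q1))) (x, 0)
      · intro f
        ext x
        simpa using LinearMap.congr_fun (hQ (f.comp (LinearMap.snd Λ Q0 Q1))) (0, x)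
    rw [← tr.ker_mkQ, hz, LinearMap.ker_zero]
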